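/- Let b > 0 be a real number. If the horizontal segment S = {(t, 0) : t ∈ [−b, b]} ⊆ ℝ × ℝ is a computable compact set, then b is a computable real number. -/

import Mathlib

/-- A real number is computable if some computable sequence of rationals
approximates it with precision `2⁻ⁿ`. -/
def IsComputableReal (x : ℝ) : Prop :=
  ∃ f : ℕ → ℚ, Computable f ∧ ∀ n : ℕ, |(f n : ℝ) - x| < (2 : ℝ) ^ (-(n : ℤ))

/-- A real number is lower-computable if some computable monotone nondecreasing
sequence of rationals converges to it. -/
def IsLowerComputableReal (x : ℝ) : Prop :=
  ∃ f : ℕ → ℚ, Computable f ∧ Monotone f ∧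
    Filter.Tendsto (fun n => (f n : ℝ)) Filter.atTop (nhds x)

/-- A real number is upper-computable if some computable monotone nonincreasing
sequence of rationals converges to it. -/
def IsUpperComputableReal (x : ℝ) : Prop :=
  ∃ f : ℕ → ℚ, Computable f ∧ Antitone f ∧
    Filter.Tendsto (fun n => (f n : ℝ)) Filter.atTop (nhds x)

/-- The finite subset of `ℝ × ℝ` determined by a finite set of rational points. -/
def ratFinsetToSet (s : Finset (ℚ × ℚ)) : Set (ℝ × ℝ) :=
  (fun q : ℚ × ℚ => (((q.1 : ℝ), (q.2 : ℝ)) : ℝ × ℝ)) '' ↑s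

/-- A function `f : ℕ → Finset (ℚ × ℚ)` is computable if it is given by a
computable list-valued function (lists being a standard effective encoding of
finite sets). -/
def ComputableFinsetFun (f : ℕ → Finset (ℚ × ℚ)) : Prop :=
  ∃ g : ℕ → List (ℚ × ℚ), Computable g ∧ ∀ n, (g n).toFinset = f n

/-- A nonempty compact set `K ⊆ ℝ × ℝ` is computable if a computable function
produces, for each `n`, a nonempty finite set of rational points at Hausdorff
distance less than `2⁻ⁿ` from `K`. -/
def IsComputableCompactSet (K : Set (ℝ × ℝ)) : Prop :=
  ∃ f : ℕ → Finset (ℚ × ℚ), ComputableFinsetFun f ∧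
    ∀ n : ℕ, (f n).Nonempty ∧
      Metric.hausdorffDist K (ratFinsetToSet (f n)) < (2 : ℝ) ^ (-(n : ℤ))

/-! A finite `2⁻ⁿ`-approximation of a set `K` has its largest abscissa within `2⁻ⁿ` of the supremum
of the abscissas of `K`, because the projection is `1`-Lipschitz. What remains is that this largest
abscissa is computed from the approximation. This takes some care, since Mathlib codes a rational
`q` by the *rank* of `(q.num, q.den)` among the codes of reduced fractions: numerator and
denominator have to be recovered by enumerating those codes. -/

section Computability

open Encodable

variable {α β σ : Type*} [Primcodable α] [Primcodable β] [Primcodable σ]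

theorem computable_list_foldl {f : α → List β} {g : α → σ} {h : α → σ × β → σ}
    (hf : Computable f) (hg : Computable g) (hh : Computable₂ h) :
    Computable fun a => (f a).foldl (fun s b => h a (s, b)) (g a) := by
  have hget : Computable fun x : α × ℕ × σ => (f x.1)[x.2.1]? :=
    Computable.list_getElem?.comp (hf.comp .fst) (Computable.fst.comp .snd)
  have hupdate : Computable₂ fun (x : α × ℕ × σ) (b : β) => h x.1 (x.2.2, b) :=
    hh.comp (Computable.fst.comp .fst)
      (.pair (Computable.snd.comp (Computable.snd.comp .fst)) .snd)
  have hstep := Computable.option_casesOn hget (Computable.snd.comp .snd) hupdate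
  refine (Computable.nat_rec (Computable.list_length.comp hf) hg hstep.to₂).of_eq fun a => ?_
  suffices ∀ k, Nat.rec (motive := fun _ => σ) (g a)
      (fun i s => Option.casesOn (f a)[i]? s fun b => h a (s, b)) k =
      ((f a).take k).foldl (fun s b => h a (s, b)) (g a) by
    simpa only [List.take_length] using this (f a).length
  intro k
  induction k with
  | zero => rfl
  | succ k ih =>
    rw [List.take_add_one, List.foldl_append, ← ih]
    cases hk : (f a)[k]? <;> simp only [hk, Option.toList, List.foldl]

theorem computable_list_max? [Max α] (hmax : Computable₂ (max : α → α → α)) :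
    Computable (List.max? : List α → Option α) := by
  have hfold : Computable₂ fun (l : List α) (a : α) => some (l.tail.foldl max a) :=
    Computable.option_some.comp (computable_list_foldl (h := fun _ p => max p.1 p.2)
      (Primrec.list_tail.to_comp.comp .fst) .snd
      (hmax.comp (Computable.fst.comp .snd) (Computable.snd.comp .snd)))
  have hcases := Computable.option_casesOn Primrec.list_head?.to_comp (.const none) hfold
  refine hcases.of_eq fun l => ?_
  cases l <;> rfl

theorem computable_count {p : ℕ → Prop} [DecidablePred p] (hp : ComputablePred p) :
    Computable (Nat.count p) := by
  have hstep : Computable₂ fun (_ : ℕ) (x : ℕ × ℕ) => bif decide (p x.1) then x.2 + 1 else x.2 :=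
    .cond (hp.decide.comp (Computable.fst.comp .snd))
      (Computable.succ.comp (Computable.snd.comp .snd)) (Computable.snd.comp .snd)
  refine (Computable.nat_rec .id (.const 0) hstep).of_eq fun n => ?_
  induction n with
  | zero => rfl
  | succ n ih =>
    by_cases hn : p n <;> simp_all [Nat.count_succ]

theorem computable_nth {p : ℕ → Prop} (hp : ComputablePred p) (hinf : {n | p n}.Infinite) :
    Computable (Nat.nth p) := by
  classical
  have hiff (k n : ℕ) : k < Nat.count p (n + 1) ↔ Nat.nth p k ≤ n :=
    (Nat.lt_nth_iff_count_lt hinf).trans Nat.lt_succ_iff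
  have hex (k : ℕ) : ∃ n, k < Nat.count p (n + 1) := ⟨Nat.nth p k, (hiff k _).2 le_rfl⟩
  have hlt : ComputablePred fun x : ℕ × ℕ => x.1 < Nat.count p (x.2 + 1) :=
    (Primrec.nat_lt.decide.to_comp.comp .fst
      ((computable_count hp).comp (Computable.succ.comp .snd))).computablePred
  refine (Computable.find hlt hex).of_eq fun k => ?_
  rw [Nat.find_eq_iff]
  simp only [hiff, le_refl, not_le, imp_self, implies_true, and_self]

theorem encode_ofEncodableOfInfinite (γ : Type*) [Encodable γ] [Infinite γ]
    [DecidablePred (· ∈ Set.range (encode : γ → ℕ))] (a : γ) :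
    (Denumerable.ofEncodableOfInfinite γ).toEncodable.encode a =
      Nat.count (· ∈ Set.range (encode : γ → ℕ)) (encode a) := by
  change (List.range (encode a)).countP _ = _
  unfold Nat.count
  congr!

theorem computable_encode_ofEncodableOfInfinite (γ : Type*) [E : Encodable γ] [Infinite γ]
    (hrange : ComputablePred (· ∈ Set.range (encode : γ → ℕ))) :
    @Computable γ ℕ (@Primcodable.ofDenumerable γ (Denumerable.ofEncodableOfInfinite γ)) _
      (encode : γ → ℕ) := by
  classical
  let D := Denumerable.ofEncodableOfInfinite γ
  have hnth := (computable_nth hrange (Set.infinite_range_of_injective encode_injective)).comp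
    (@Computable.encode γ (@Primcodable.ofDenumerable γ D))
  refine hnth.of_eq fun a => ?_
  change Nat.nth _ (D.toEncodable.encode a) = _
  rw [encode_ofEncodableOfInfinite]
  exact Nat.nth_count (p := (· ∈ Set.range E.encode)) ⟨a, rfl⟩

theorem primrecRel_dvd : PrimrecRel fun m n : ℕ => m ∣ n :=
  (PrimrecRel.comp Primrec.eq (Primrec.nat_mod.comp .snd .fst) (.const 0)).of_eq fun _ =>
    Nat.dvd_iff_mod_eq_zero.symm

theorem primrecRel_coprime : PrimrecRel Nat.Coprime := by
  have hcommon : PrimrecRel fun (k : ℕ) (x : ℕ × ℕ) => (k ∣ x.1 ∧ k ∣ x.2) ∧ k ≠ 1 :=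
    ((primrecRel_dvd.comp .fst (Primrec.fst.comp .snd)).and
      (primrecRel_dvd.comp .fst (Primrec.snd.comp .snd))).and (Primrec.eq.comp .fst (.const 1)).not
  have hexists := hcommon.exists_mem_list.comp
    (Primrec.list_range.comp (Primrec.succ.comp (Primrec.nat_add.comp .fst .snd))) .id
  refine hexists.not.of_eq fun ⟨m, n⟩ => ?_
  constructor
  · intro h
    by_contra hgcd
    have hle : m.gcd n ≤ m + n := by
      rcases m.eq_zero_or_pos with rfl | hm
      · simp
      · exact (Nat.gcd_le_left n hm).trans (Nat.le_add_right m n)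
    exact h ⟨m.gcd n, List.mem_range.2 (Nat.lt_succ_of_le hle),
      ⟨Nat.gcd_dvd_left m n, Nat.gcd_dvd_right m n⟩, hgcd⟩
  · rintro hcop ⟨k, -, ⟨hm, hn⟩, hk⟩
    exact hk (Nat.eq_one_of_dvd_coprimes hcop hm hn)

theorem encode_int_ofNat (n : ℕ) : encode (n : ℤ) = 2 * n :=
  rfl

theorem encode_int_negSucc (n : ℕ) : encode (Int.negSucc n) = 2 * n + 1 :=
  rfl

theorem primrec_int_natAbs : Primrec Int.natAbs := by
  refine (Primrec.nat_div.comp (Primrec.succ.comp .encode) (.const 2)).of_eq fun z => ?_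
  cases z with
  | ofNat n => simp only [Int.ofNat_eq_natCast, encode_int_ofNat, Int.natAbs_natCast]; omega
  | negSucc n => simp only [encode_int_negSucc, Int.natAbs_negSucc]; omega

theorem primrec_int_toNat : Primrec Int.toNat := by
  refine (Primrec.ite (Primrec.eq.comp (Primrec.nat_mod.comp .encode (.const 2)) (.const 0))
    primrec_int_natAbs (.const 0)).of_eq fun z => ?_
  cases z with
  | ofNat n => simp [encode_int_ofNat]
  | negSucc n => simp [encode_int_negSucc]

theorem primrec_int_toNat_neg : Primrec fun z : ℤ => (-z).toNat :=
  (Primrec.nat_sub.comp primrec_int_natAbs primrec_int_toNat).of_eq fun z => by omega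

theorem computable_rat_num_den : Computable fun q : ℚ => (q.num, q.den) := by
  have hreduced : PrimrecPred fun x : ℤ × ℕ => 0 < x.2 ∧ x.1.natAbs.Coprime x.2 :=
    (Primrec.nat_lt.comp (.const 0) .snd).and
      (primrecRel_coprime.comp (primrec_int_natAbs.comp .fst) .snd)
  have hrange : PrimrecPred (· ∈ Set.range (Rat.instEncodable.encode)) := by
    refine (hreduced.comp (Primrec.ofNat (ℤ × ℕ))).of_eq fun m => ?_
    constructor
    · intro ⟨hpos, hcop⟩
      exact ⟨⟨_, _, hpos.ne', hcop⟩, Denumerable.encode_ofNat (α := ℤ × ℕ) m⟩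
    · rintro ⟨q, rfl⟩
      have hq : Denumerable.ofNat (ℤ × ℕ) (Rat.instEncodable.encode q) = (q.num, q.den) :=
        Denumerable.ofNat_encode (q.num, q.den)
      rw [hq]
      exact ⟨q.den_pos, q.reduced⟩
  exact Computable.encode_iff.1
    (computable_encode_ofEncodableOfInfinite ℚ hrange.computablePred)

/-- Splitting the numerators into positive and negative parts reduces the comparison of rationals to
arithmetic in `ℕ`, so that integer multiplication need not be shown computable. -/
theorem rat_le_iff_toNat (a b : ℚ) :
    a ≤ b ↔ a.num.toNat * b.den + (-b.num).toNat * a.den ≤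
      b.num.toNat * a.den + (-a.num).toNat * b.den := by
  have ha := Int.toNat_sub_toNat_neg a.num
  have hb := Int.toNat_sub_toNat_neg b.num
  rw [Rat.le_iff]
  conv_lhs => rw [← ha, ← hb]
  zify
  constructor <;> intro h <;> linarith

theorem computablePred_rat_le : ComputablePred fun x : ℚ × ℚ => x.1 ≤ x.2 := by
  have hnum : Computable Rat.num := Computable.fst.comp computable_rat_num_den
  have hden : Computable Rat.den := Computable.snd.comp computable_rat_num_den
  have hside : Computable₂ fun a b : ℚ => a.num.toNat * b.den + (-b.num).toNat * a.den :=
    Primrec.nat_add.to_comp.comp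
      (Primrec.nat_mul.to_comp.comp (primrec_int_toNat.to_comp.comp (hnum.comp .fst))
        (hden.comp .snd))
      (Primrec.nat_mul.to_comp.comp (primrec_int_toNat_neg.to_comp.comp (hnum.comp .snd))
        (hden.comp .fst))
  exact (Primrec.nat_le.decide.to_comp.comp hside
    (hside.comp .snd .fst)).computablePred.of_eq fun x => (rat_le_iff_toNat x.1 x.2).symm

theorem computable_rat_max : Computable₂ (max : ℚ → ℚ → ℚ) :=
  (Computable.cond computablePred_rat_le.decide .snd .fst).of_eq fun x => by
    rw [Bool.cond_decide, max_def]

end Computability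

section Hausdorff

open Metric

variable {α : Type*} [PseudoMetricSpace α] {s t : Set α} {f : α → ℝ} {a b : ℝ} {C : NNReal}

theorem add_mul_hausdorffDist_mem_upperBounds (hf : LipschitzWith C f)
    (hst : hausdorffEDist s t ≠ ⊤) (hb : b ∈ upperBounds (f '' t)) :
    b + C * hausdorffDist s t ∈ upperBounds (f '' s) := by
  rintro _ ⟨x, hx, rfl⟩
  have htendsto : Filter.Tendsto (fun r : ℝ => b + C * r) (nhdsWithin (hausdorffDist s t)
      (Set.Ioi (hausdorffDist s t))) (nhds (b + C * hausdorffDist s t)) :=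
    (by fun_prop : Continuous fun r : ℝ => b + C * r).continuousWithinAt
  refine ge_of_tendsto htendsto (eventually_mem_nhdsWithin.mono fun r hr => ?_)
  obtain ⟨y, hy, hxy⟩ := exists_dist_lt_of_hausdorffDist_lt hx hr hst
  calc f x ≤ f y + C * dist x y := hf.le_add_mul x y
    _ ≤ b + C * r := by gcongr; exact hb ⟨y, hy, rfl⟩

theorem dist_le_mul_hausdorffDist_of_isLUB_image (hf : LipschitzWith C f)
    (hst : hausdorffEDist s t ≠ ⊤) (ha : IsLUB (f '' s) a) (hb : IsLUB (f '' t) b) :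
    dist a b ≤ C * hausdorffDist s t := by
  rw [Real.dist_eq, abs_sub_le_iff, sub_le_iff_le_add', sub_le_iff_le_add']
  refine ⟨ha.2 (add_mul_hausdorffDist_mem_upperBounds hf hst hb.1), ?_⟩
  rw [hausdorffDist_comm]
  exact hb.2 (add_mul_hausdorffDist_mem_upperBounds hf (hausdorffEDist_comm.trans_ne hst) ha.1)

end Hausdorff

/-- The largest first coordinate in a list of rational points, with value `0` on the empty list. -/
def maxFst (l : List (ℚ × ℚ)) : ℚ :=
  (l.map Prod.fst).max?.getD 0

theorem computable_maxFst : Computable maxFst :=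
  ((computable_list_max? computable_rat_max).comp
    (Primrec.list_map .id (Primrec.fst.comp .snd).to₂).to_comp).option_getD (.const 0)

theorem isGreatest_maxFst {l : List (ℚ × ℚ)} (hl : l ≠ []) :
    IsGreatest (Prod.fst '' ratFinsetToSet l.toFinset) (maxFst l : ℝ) := by
  have hmap : l.map Prod.fst ≠ [] := mt List.map_eq_nil_iff.1 hl
  have hmax : (l.map Prod.fst).max? = some (maxFst l) := by
    rw [maxFst, List.max?_eq_some_max hmap, Option.getD_some]
  obtain ⟨hmem, hle⟩ := List.max?_eq_some_iff.1 hmax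
  constructor
  · obtain ⟨q, hq, hqmax⟩ := List.mem_map.1 hmem
    exact ⟨_, ⟨q, List.mem_toFinset.2 hq, rfl⟩, congrArg Rat.cast hqmax⟩
  · rintro _ ⟨_, ⟨q, hq, rfl⟩, rfl⟩
    exact Rat.cast_le.2 (hle _ (List.mem_map_of_mem (List.mem_toFinset.1 hq)))

theorem computableReal_of_computable_segment_general {K : Set (ℝ × ℝ)}
    (hK : IsComputableCompactSet K) (hbdd : Bornology.IsBounded K) {b : ℝ}
    (hb : IsLUB (Prod.fst '' K) b) : IsComputableReal b := by
  obtain ⟨f, ⟨g, hg, hgf⟩, hf⟩ := hK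
  refine ⟨fun n => maxFst (g n), computable_maxFst.comp hg, fun n => ?_⟩
  obtain ⟨hne, hdist⟩ := hf n
  rw [← hgf n] at hne hdist
  have hfinite : Metric.hausdorffEDist K (ratFinsetToSet (g n).toFinset) ≠ ⊤ :=
    Metric.hausdorffEDist_ne_top_of_nonempty_of_bounded hb.nonempty.of_image
      (hne.to_set.image _) hbdd ((Finset.finite_toSet _).image _).isBounded
  have hmax := isGreatest_maxFst (List.toFinset_nonempty_iff _ |>.1 hne)
  calc |(maxFst (g n) : ℝ) - b| = dist b (maxFst (g n)) := by rw [dist_comm, Real.dist_eq]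
    _ ≤ (1 : NNReal) * Metric.hausdorffDist K (ratFinsetToSet (g n).toFinset) :=
      dist_le_mul_hausdorffDist_of_isLUB_image LipschitzWith.prod_fst hfinite hb hmax.isLUB
    _ = Metric.hausdorffDist K (ratFinsetToSet (g n).toFinset) := by rw [NNReal.coe_one, one_mul]
    _ < 2 ^ (-(n : ℤ)) := hdist

/-- if the horizontal segment `[-b,b] × {0}` is a computable
compact subset of the plane, then `b` is a computable real number. -/
theorem computableReal_of_computable_segment (b : ℝ) (hb : 0 < b)
    (h : IsComputableCompactSet {p : ℝ × ℝ | p.1 ∈ Set.Icc (-b) b ∧ p.2 = 0}) :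
    IsComputableReal b := by
  have hsegment : {p : ℝ × ℝ | p.1 ∈ Set.Icc (-b) b ∧ p.2 = 0} = Set.Icc (-b) b ×ˢ {0} := rfl
  rw [hsegment] at h
  refine computableReal_of_computable_segment_general h
    ((Metric.isBounded_Icc _ _).prod Bornology.isBounded_singleton) ?_
  rw [Set.fst_image_prod _ (Set.singleton_nonempty 0)]
  exact isLUB_Icc (by linarith)
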